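/- Up to isomorphism, there are exactly 3 Harris graphs on 8 vertices. -/

import Mathlib

universe u

/-- A graph is *Hamiltonian* if it contains a cycle passing through every vertex
exactly once. -/
def SimpleGraph.IsHamiltonianGraph {V : Type*} (G : SimpleGraph V) : Prop :=
  ∃ (a : V) (p : G.Walk a a), p.IsCycle ∧ ∀ v : V, v ∈ p.support

/-- A graph is *tough* if for every set `S` of vertices whose removal disconnects the
graph, the number of connected components of `G − S` is at most `|S|`. -/
def SimpleGraph.Tough {V : Type*} (G : SimpleGraph V) : Prop :=
  ∀ S : Finset V, ¬ (G.induce ((S : Set V)ᶜ)).Connected →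
    Nat.card (G.induce ((S : Set V)ᶜ)).ConnectedComponent ≤ S.card

/-- A graph is *Eulerian* if it is connected and every vertex has even degree. -/
def SimpleGraph.IsEulerianGraph {V : Type*} (G : SimpleGraph V) : Prop :=
  G.Connected ∧ ∀ v : V, Even (Nat.card (G.neighborSet v))

/-- A *Harris graph* is a finite simple graph that is tough, Eulerian and
non-Hamiltonian. -/
def SimpleGraph.IsHarris {V : Type*} (G : SimpleGraph V) : Prop :=
  Finite V ∧ G.Tough ∧ G.IsEulerianGraph ∧ ¬ G.IsHamiltonianGraph

namespace HarrisEight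

/-- Bit `i` of `m`. -/
def bt (m i : Nat) : Bool := Nat.beq (Nat.land (Nat.shiftRight m i) 1) 1

/-- Entry `(i, j)` of an `8 × 8` bit matrix packed into a natural number. -/
def tst (m i j : Nat) : Bool := bt m (Nat.add (Nat.mul 8 i) j)

/-- Row `i` of such a matrix. -/
def row (m i : Nat) : Nat := Nat.land (Nat.shiftRight m (Nat.mul 8 i)) 255

def gmask : Fin 3 → Nat := ![5801210875916025094, 6665910922341219590, 2599872665875986694]

/-- Cut certificates: mask of the edges that must be absent, and the labelling
(octal digits, label 0 for the deleted vertices). -/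
def certs : List (Nat × Nat) := [
  (217020518514096376, 4793353), (651061559434412280, 7189505), (1229783865959121144, 4797441),
  (2387428013793870072, 4826113), (7179796635726176480, 9240585), (361700864206307576, 4793409),
  (4735888231675986168, 5055489), (6022157964243161296, 9183241), (32080003596344, 144449),
  (3675099624223322288, 8495113), (8755421543799980280, 6890497), (14446908479139952, 1155081),
  (506381209764425968, 4792393), (8163106468921432, 1061953), (12751038048632936, 1147969),
  (2089670835200065688, 8401985), (15012066053062768, 1155137), (3242746765625524392, 8488001),
  (5588122715954872520, 9176129), (3819217019923857584, 8495169), (6451688533101904088, 9188353),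
  (7604760082659672296, 9274369), (4107434084634984632, 8500225), (6166836110875951312, 9183297),
  (16124653449773176, 1160193), (8183482393462571248, 9281537), (5307853903956541672, 7439361),
  (5303270353244520664, 7353345), (7324476972793331936, 9240641), (4123539971745251576, 7152641),
  (6456192372979007704, 9184257), (6453940606719754456, 8926209), (4107451779631808696, 8496129),
  (4107443017630089400, 8467457), (3400147353154404544, 4751945), (6026752685896691952, 6922249),
  (7175240684742439152, 5087241), (3978860726684008640, 4755529), (2242511967321374912, 4723273),
  (5886576214759440624, 7446529), (5879731653156274392, 5256193), (2954529759897321656, 6435841),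
  (16142348446597240, 1156097), (16133586444877944, 1127425), (11638508569493624, 930817),
  (8192542231836492016, 9248769), (8188056086956212464, 9019393), (7613828854028697832, 9241601),
  (7611585849771163880, 9012225), (8323641134974824688, 6889481), (4878316776414310640, 5054473),
  (7460079741847003360, 6881353), (5163173563143872736, 5046345), (3530991059809075384, 4338689),
  (1801468067557933240, 8532993), (13890582187343992, 668673), (7064815075852408, 1192961),
  (3689507762032668912, 7151625), (2532099562789728496, 4825097), (1374464176956698864, 7184393),
  (7039637907098829040, 5349377), (7037376896207683816, 5342209), (2966122835212239080, 9536513),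
  (5732800853899788480, 6816329), (2233820189925875872, 4264521), (8760223072280672, 594505),
  (6458541891351740664, 6923265), (7032820936634007800, 5088257), (7607021128195768568, 6894593),
  (5884324175786541304, 5059585), (5310106016497533176, 6927361), (8181221421494567160, 5092353),
  (2821442494399570144, 7143497), (6311514227429392576, 6819913), (3544845146015138032, 9543681),
  (1808477592160829656, 9450497), (6307010382989938896, 6824009), (5158592203132555472, 4989001),
  (3963316685987950768, 6365257), (2810412361250287792, 4300873), (15559493994705008, 860233),
  (11073349114425456, 630857), (3386864152640266400, 6357577), (13316186940924000, 852553),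
  (3472501593863094320, 2433601), (2893797131937120296, 2430017), (1736165032021458968, 2401345),
  (2666303762275500216, 4301889), (1513233307934392504, 4273217), (936763075027534008, 6403137),
  (10516988262088824, 631873), (5934532766728312, 603201), (3673526153773176, 898113),
  (7469149613262422208, 6848585), (1663799442048864464, 7086153), (3963334385547124896, 6361161),
  (1657350668910899376, 6398025), (15577193553879136, 856137), (6499655620784240, 893001),
  (6314143022290346144, 4526153), (6960198187703361632, 2691145), (5737672789383487648, 4522569),
  (6957937181090406496, 2687561), (8468321480632959216, 6889537), (5022997122072445168, 5054529),
  (2676779908447863024, 4825153), (6171433031554826480, 6922305), (7319921030400573680, 5087297),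
  (1519144522614833392, 7184449), (7891860159329730792, 6882369), (5020745027063120104, 5047361),
  (2676770954061283560, 4817985), (5594962777256493288, 6915137), (7317660002396143848, 5080129),
  (940422194698649832, 7177281), (6738792990905991384, 6825025), (5016165857485127896, 4990017),
  (1519121330142183640, 4731969), (5590374845676781784, 6829121), (6164584071970685144, 4994113),
  (940407956612579544, 7091265), (4395660044834177208, 6366273), (17246137399902328, 861249),
  (2233786031781482640, 6300233), (8726064927887440, 795209), (34287532388400, 107081)]

/-- Surviving graphs: adjacency mask, index of the class, and an isomorphism (octal digits). -/
def table : List (Nat × Fin 3 × Nat) := [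
  (5801210875916025094, 0, 16434824), (3461722811429256454, 0, 16205448), (5224758508999376134, 0, 16431240),
  (2887513585135353094, 0, 16201864), (6954276949123104006, 0, 16406152), (3461735954298666246, 0, 15947400),
  (5224771651868785926, 0, 16398984), (1739038729159015686, 0, 15940232), (6957641455243066630, 0, 16148104),
  (5804588524905397510, 0, 15918728), (2890891234124725510, 0, 16137352), (1742403235278978310, 0, 15907976),
  (6665910922341219590, 1, 16434824), (4328665998477196550, 1, 16205448), (7818981376682327302, 1, 16406152),
  (4333248453972557062, 1, 15947400), (7825710525820140806, 1, 16148104), (6677222526974393606, 1, 15918728),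
  (6954285899231493382, 0, 16373896), (5801232968893824262, 0, 16370312), (2887535678113152262, 0, 15685768),
  (1739047679267405062, 0, 15682184), (6959893545974201606, 0, 16115848), (3467352551149763846, 0, 16108680),
  (5230388248719883526, 0, 15657096), (1744655326010113286, 0, 15649928), (6665902006459399430, 1, 16431240),
  (4326413941972630790, 1, 16201864), (8395442693707365638, 1, 16373896), (8402171842845179142, 1, 16115848),
  (4333257404080946438, 1, 15685768), (6679474617705528582, 1, 15657096), (5811418689997864198, 0, 15854216),
  (3471930625511095558, 0, 15850632), (5234966323081215238, 0, 15624840), (2897721399217192198, 0, 15621256),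
  (7818968079666478342, 1, 16398984), (8395438312573336838, 1, 16370312), (4326427084842040582, 1, 15940232),
  (8406749917206510854, 1, 15854216), (4328688091454995718, 1, 15682184), (7832540690912607494, 1, 15624840),
  (7822332585786440966, 1, 16137352), (8401045959316045062, 1, 16108680), (6669279655448771846, 1, 15907976),
  (8405628414811405574, 1, 15850632), (6671540662061726982, 1, 15649928), (7829176047894756614, 1, 15621256),
  (5801776024898968838, 0, 16434768), (3462287960412200198, 0, 16205392), (5225323657982319878, 0, 16431184),
  (2888078734118296838, 0, 16201808), (4940462321290648838, 0, 14599760), (4938219180667903238, 0, 14596176),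
  (1452486257958132998, 0, 14137424), (878277031664229638, 0, 14141008), (2599852754408774918, 0, 12531792),
  (1451364755563027718, 0, 12302416), (2597609613786029318, 0, 12535376), (874912388646378758, 0, 12306000),
  (2599874864901463302, 1, 10212944), (1451386866055716102, 1, 10442320), (4943848937903299846, 1, 9954896),
  (1458116015193529606, 1, 10413648), (6666476071324163334, 1, 9926224), (4329231147460140294, 1, 10155600),
  (2597622808396897542, 1, 8116304), (4943840022021479686, 1, 7858256), (874925583257246982, 1, 8345680),
  (6666467155442343174, 1, 7829584), (881654732395060486, 1, 8317008), (4326979090955574534, 1, 8058960),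
  (2455181213438703878, 1, 4445966), (1306693214592956678, 1, 4441934), (2452938072815958278, 1, 4446414),
  (730240847676307718, 1, 4438350), (1299885142478289158, 1, 4442830), (725675916184385798, 1, 4438798),
  (4798033784045435142, 1, 4450509), (4795790643422689542, 1, 4450061), (1310057720712919302, 1, 4441997),
  (735848494419015942, 1, 4438413), (1305492789220997382, 1, 4443341), (729040422304348422, 1, 4439309),
  (6233556440151881990, 1, 4421837), (3894068375665113350, 1, 4405709), (5657104073235233030, 1, 4421389),
  (3319859149371209990, 1, 4409293), (2166806219033540870, 1, 4411085), (2164563078410795270, 1, 4407053),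
  (4802611858406766854, 1, 4451020), (2463123793919998214, 1, 4447436), (4795803786292099334, 1, 4450124),
  (2458558862428076294, 1, 4446092), (735861637288425734, 1, 4438924), (733618496665680134, 1, 4439372),
  (7386622513358960902, 1, 4422348), (3324437223732541702, 1, 4415180), (3894081518534523142, 1, 4406220),
  (5657117216104642822, 1, 4421452), (2171384293394872582, 1, 4413388), (3317629151617874182, 1, 4407116),
  (7389987019478923526, 1, 4390092), (5667289794339272966, 1, 4386508), (6236934089141254406, 1, 4373964),
  (5662724862847351046, 1, 4374412), (3323236798360582406, 1, 4388748), (2174748799514835206, 1, 4384716),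
  (2455194527834175750, 0, 4438798), (1306706528988428550, 0, 4438350), (4799168600836012294, 0, 4439309),
  (1313435678126242054, 0, 4438413), (6521795734256875782, 0, 4407053), (4184550810392852742, 0, 4405709),
  (4803751056331372806, 0, 4439372), (2466506132467349766, 0, 4438924), (7674866188597983494, 0, 4407116),
  (4189133265888213254, 0, 4406220), (7681595337735796998, 0, 4374412), (6533107338890049798, 0, 4373964),
  (4802620808515156230, 1, 4451083), (2465375884651133190, 1, 4447499), (4798055877023234310, 1, 4450635),
  (1312322954313464070, 1, 4443467), (2458567812536465670, 1, 4446603), (1310079813690718470, 1, 4443019),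
  (7386631463467350278, 1, 4422411), (3900898540757580038, 1, 4415243), (6233578533129681158, 1, 4421963),
  (3896333609265658118, 1, 4411211), (3319881242349009158, 1, 4410315), (2171393243503261958, 1, 4413899),
  (7392239110210058502, 1, 4390155), (6243751111364311302, 1, 4386571), (6236943039249643782, 1, 4378507),
  (3899698115385620742, 1, 4389259), (5662733812955740422, 1, 4378059), (2177000890245970182, 1, 4385227),
  (2452942471329609990, 0, 4442830), (4799159684954192134, 0, 4443341), (730245246189959430, 0, 4441934),
  (6521786818375055622, 0, 4411085), (736974395327772934, 0, 4441997), (4182298753888286982, 0, 4409293),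
  (4806003147062507782, 0, 4443467), (8251327505623021830, 0, 4411211), (2466515082575739142, 0, 4443019),
  (8258056654760835334, 0, 4378507), (4189142215996602630, 0, 4410315), (6535359429621184774, 0, 4378059),
  (7392252253079468294, 1, 4353867), (6243764254233721094, 1, 4357451), (7390009112456722694, 1, 4349835),
  (3904276189746952454, 1, 4357003), (5667311887317072134, 1, 4349387), (3330066963453049094, 1, 4352971),
  (1299885159857912070, 0, 4446414), (4803737759315523846, 0, 4447436), (725675933564008710, 0, 4445966),
  (7674852891582134534, 0, 4415180), (4805998765928478982, 0, 4447499), (8251323124488993030, 0, 4415243),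
  (736987538197182726, 0, 4446092), (4182311896757696774, 0, 4413388), (1313457771104041222, 0, 4446603),
  (8262634729122167046, 0, 4349835), (4184572903370651910, 0, 4413899), (7688425502828263686, 0, 4349387),
  (1305492806600620294, 0, 4450509), (2463128192433649926, 0, 4451020), (729040439683971334, 0, 4450061),
  (7678217397702097158, 0, 4386508), (2465389199046605062, 0, 4451083), (8256930771231701254, 0, 4386571),
  (733622895179331846, 0, 4450124), (6525164467364428038, 0, 4384716), (1312336268708935942, 0, 4450635),
  (8261513226727061766, 0, 4353867), (6527425473977383174, 0, 4385227), (7685060859810412806, 0, 4352971),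
  (2166806236413163782, 0, 4421837), (3324441622246193414, 0, 4422348), (2164563095790418182, 0, 4421389),
  (5668415695248029958, 0, 4390092), (3900911855153051910, 0, 4422411), (6247129068777634054, 0, 4390155),
  (3317633550131525894, 0, 4421452), (5663850763756108038, 0, 4388748), (3896346923661129990, 0, 4421963),
  (7400199523118741766, 0, 4357451), (6240320996662966534, 0, 4389259), (7397956382495996166, 0, 4357003),
  (2599859351480514822, 1, 2348822), (1451371352634767622, 1, 2344790), (2597616210857769222, 1, 2349270),
  (874918985718118662, 1, 2341206), (1444563280520100102, 1, 2345686), (870354054226196742, 1, 2341654),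
  (2599872665875986694, 2, 16434824), (1451384667030239494, 2, 14599816), (7826273475777607942, 2, 11789904),
  (6677785476931860742, 2, 9954896), (2889228945143183622, 0, 760606), (1740740946297436422, 0, 760158),
  (2597620609371420934, 2, 16431240), (874923384231770374, 2, 14596232), (8402734792802646278, 2, 11528272),
  (6680037567662995718, 2, 7858256), (3465690262168221958, 0, 760550), (1742993037028571398, 0, 759654),
  (1444563297899723014, 2, 16398984), (870354071605819654, 2, 14563976), (8407312867163977990, 2, 9431632),
  (7833103640870074630, 2, 7596624), (3470268336529553670, 0, 760046), (2896059110235650310, 0, 759598),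
  (2599874873492310278, 0, 2341654), (1451386874646563078, 0, 2341206), (4943848946494146822, 0, 2342165),
  (1458116023784376582, 0, 2341269), (6666476079915010310, 0, 2309909), (4329231156050987270, 0, 2308565),
  (4948431401989507334, 0, 2342228), (2611186478125484294, 0, 2341780), (7819546534256118022, 0, 2309972),
  (4333813611546347782, 0, 2309076), (7826275683393931526, 0, 2277268), (6677787684548184326, 0, 2276820),
  (2889231152759507206, 0, 502558), (1740743153913760006, 0, 502110), (5232083723366238470, 0, 503069),
  (1746350800656468230, 0, 502173), (6667606379472685318, 0, 470813), (4330361455608662278, 0, 469469),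
  (5236661797727570182, 0, 503132), (2899416873863547142, 0, 502684), (7820672452679764230, 0, 470876),
  (4334939529969993990, 0, 469980), (7826280099422472454, 0, 438172), (6677792100576725254, 0, 437724)]

/-- `force n f = f n`, but the kernel evaluates `n` to a literal first. -/
def force (n : Nat) (f : Nat → Bool) : Bool := Nat.rec (f 0) (fun k _ => f (Nat.succ k)) n

/-- `List.any`, in a form that is cheap for the kernel. -/
def anyB {α : Type} (p : α → Bool) (l : List α) : Bool :=
  List.rec false (fun a _ ih => or (p a) ih) l

/-- One step of the search for a Hamiltonian cycle: leave `c` for a vertex `v` of `R`. -/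
def hamStep (m : Nat) (k : Nat → Nat → Bool) (c R : Nat) : Bool :=
  force (Nat.land (row m c) R) fun b =>
    or (and (bt b 1) (force (Nat.xor R 2) (k 1))) <|
    or (and (bt b 2) (force (Nat.xor R 4) (k 2))) <|
    or (and (bt b 3) (force (Nat.xor R 8) (k 3))) <|
    or (and (bt b 4) (force (Nat.xor R 16) (k 4))) <|
    or (and (bt b 5) (force (Nat.xor R 32) (k 5))) <|
    or (and (bt b 6) (force (Nat.xor R 64) (k 6))) <|
    and (bt b 7) (force (Nat.xor R 128) (k 7))

/-- Backtracking search for a path from `c` through `l` vertices of `R`, closing up at `0`. -/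
def ham (m l : Nat) : Nat → Nat → Bool :=
  Nat.rec (fun c _ => tst m c 0) (fun _ k => hamStep m k) l

/-- Leaf of the search: `y` are the edges present, `n` the edges absent. -/
def leafS (y n : Nat) : Bool :=
  and (Nat.beq (Nat.lor y n) 18446744073709551615) (anyB (fun t => Nat.beq t.1 y) table)

/-- Branch on an edge. -/
def edgeS (e : Nat) (k : Nat → Nat → Bool) (y n : Nat) : Bool :=
  and (force (Nat.lor y e) fun y' => k y' n) (force (Nat.lor n e) fun n' => k y n')

/-- Prune if the degree of `v` is known and is bad (bit not set in `p`). -/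
def rowS (p v : Nat) (k : Nat → Nat → Bool) (y n : Nat) : Bool :=
  or (and (Nat.beq (row (Nat.lor y n) v) 255) (not (bt p (row y v)))) (k y n)

/-- Prune by symmetry. -/
def symS (j : Nat) (k : Nat → Nat → Bool) (y n : Nat) : Bool :=
  or (and (tst y 1 (Nat.succ j)) (tst n 1 j)) (k y n)

/-- Prune if there is a Hamiltonian cycle. -/
def hamS (k : Nat → Nat → Bool) (y n : Nat) : Bool :=
  or (ham y 7 0 254) (k y n)

/-- Prune if there is a Hamiltonian cycle through the edge `01`. -/
def hamT (k : Nat → Nat → Bool) (y n : Nat) : Bool :=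
  or (and (tst y 0 1) (ham y 6 1 252)) (k y n)

/-- Prune if there is a cut violating toughness. -/
def cutS (k : Nat → Nat → Bool) (y n : Nat) : Bool :=
  or (anyB (fun c => Nat.beq (Nat.land c.1 n) c.1) certs) (k y n)

/-- The rows (as 8-bit numbers) with an even number, at least `2`, of ones. -/
def p2 : Nat := 68033174967769840440887906939858451149105560803546820641877549596291376780904

/-- The rows (as 8-bit numbers) with an even number, at least `4`, of ones. -/
def p4 : Nat := 68033174967769840434610805203010246352595171927412205637954218530395371110400

/-- The rows (as 8-bit numbers) with an even number, at least `6`, of ones. -/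
def p6 : Nat := 68031400625725490010187345496824814795678939260913409356179205033508439326720

/-- The search with minimum degree `2`. -/
def prog2 : Nat → Nat → Bool :=
  edgeS 132096 <| edgeS 33556480 <| edgeS 8589938688 <| symS 3 <| edgeS 2199023263744 <|
  symS 4 <| edgeS 562949953437696 <| symS 5 <| edgeS 144115188075888640 <| symS 6 <| rowS p2 1 <|
  edgeS 67633152 <| edgeS 17180917760 <| edgeS 4398048608256 <| edgeS 1125899911036928 <|
  edgeS 288230376160100352 <| rowS p2 2 <| edgeS 34628173824 <| edgeS 8796629893120 <|
  edgeS 2251800887427072 <| edgeS 576460754450907136 <| rowS p2 3 <| edgeS 17729624997888 <|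
  edgeS 4503874505277440 <| edgeS 1152922054362660864 <| rowS p2 4 <| edgeS 9077567998918656 <|
  edgeS 2305983746702049280 <| rowS p2 5 <| edgeS 4647714815446351872 <| rowS p2 6 <| rowS p2 7 <|
  cutS <| hamT <| leafS

/-- The search with minimum degree `4`. -/
def prog4 : Nat → Nat → Bool :=
  edgeS 132096 <| edgeS 33556480 <| symS 2 <| edgeS 8589938688 <| symS 3 <|
  edgeS 2199023263744 <| edgeS 562949953437696 <| symS 5 <| edgeS 144115188075888640 <| symS 6 <|
  rowS p4 1 <| edgeS 67633152 <| edgeS 17180917760 <| edgeS 4398048608256 <|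
  edgeS 1125899911036928 <| edgeS 288230376160100352 <| rowS p4 2 <| edgeS 34628173824 <|
  edgeS 8796629893120 <| edgeS 2251800887427072 <| edgeS 576460754450907136 <| rowS p4 3 <|
  edgeS 17729624997888 <| edgeS 4503874505277440 <| edgeS 1152922054362660864 <| rowS p4 4 <|
  edgeS 9077567998918656 <| edgeS 2305983746702049280 <| rowS p4 5 <| edgeS 4647714815446351872 <|
  rowS p4 6 <| rowS p4 7 <| hamS <| leafS

/-- The search with minimum degree `6`. -/
def prog6 : Nat → Nat → Bool :=
  edgeS 132096 <| edgeS 33556480 <| symS 2 <| edgeS 8589938688 <| symS 3 <|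
  edgeS 2199023263744 <| symS 4 <| edgeS 562949953437696 <| symS 5 <| edgeS 144115188075888640 <|
  rowS p6 1 <| edgeS 67633152 <| edgeS 17180917760 <| edgeS 4398048608256 <|
  edgeS 1125899911036928 <| edgeS 288230376160100352 <| rowS p6 2 <| edgeS 34628173824 <|
  edgeS 8796629893120 <| edgeS 2251800887427072 <| edgeS 576460754450907136 <| rowS p6 3 <| hamS <|
  edgeS 17729624997888 <| edgeS 4503874505277440 <| edgeS 1152922054362660864 <| rowS p6 4 <|
  edgeS 9077567998918656 <| edgeS 2305983746702049280 <| rowS p6 5 <| edgeS 4647714815446351872 <|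
  rowS p6 6 <| rowS p6 7 <| hamS <| leafS

/-! ### Bits -/

theorem bt_eq (m i : Nat) : bt m i = m.testBit i := by
  have h : bt m i = Nat.beq ((m >>> i) &&& 1) 1 := rfl
  rw [h, Nat.testBit, Nat.and_comm 1, Nat.and_one_is_mod]
  rcases Nat.mod_two_eq_zero_or_one (m >>> i) with h | h <;> rw [h] <;> rfl

theorem bt_lor (a b i : Nat) : bt (Nat.lor a b) i = (bt a i || bt b i) := by
  simp only [bt_eq]; exact Nat.testBit_or a b i

theorem bt_land (a b i : Nat) : bt (Nat.land a b) i = (bt a i && bt b i) := by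
  simp only [bt_eq]; exact Nat.testBit_and a b i

theorem bt_xor (a b i : Nat) : bt (Nat.xor a b) i = (bt a i ^^ bt b i) := by
  simp only [bt_eq]; exact Nat.testBit_xor a b i

theorem tst_lor (a b i j : Nat) : tst (Nat.lor a b) i j = (tst a i j || tst b i j) := bt_lor _ _ _

theorem tst_land (a b i j : Nat) : tst (Nat.land a b) i j = (tst a i j && tst b i j) :=
  bt_land _ _ _

theorem bt_row (m i : Nat) (j : Fin 8) : bt (row m i) j = tst m i j := by
  have h : row m i = Nat.land (m >>> (8 * i)) 255 := rfl
  have h2 : ∀ j : Fin 8, bt 255 j = true := by decide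
  rw [h, bt_land, h2, Bool.and_true, tst, bt_eq, bt_eq, Nat.testBit_shiftRight]
  rfl

theorem row_lt (m i : Nat) : row m i < 256 := by
  have h : row m i = (m >>> (8 * i)) &&& 255 := rfl
  rw [h]
  exact lt_of_le_of_lt Nat.and_le_right (by norm_num)

theorem force_eq (n : Nat) (f : Nat → Bool) : force n f = f n := by
  cases n <;> rfl

theorem anyB_eq {α : Type} (p : α → Bool) (l : List α) : anyB p l = l.any p := by
  induction l with
  | nil => rfl
  | cons a l ih =>
    have : anyB p (a :: l) = (p a || anyB p l) := rfl
    rw [this, ih, List.any_cons]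

/-- Number of ones among the first eight bits. -/
def pc (r : Nat) : Nat := (Finset.univ.filter fun j : Fin 8 => bt r j = true).card

/-! ### The three graphs -/

/-- The three Harris graphs. -/
def Gr (i : Fin 3) : SimpleGraph (Fin 8) where
  Adj a b := tst (gmask i) a b = true
  symm := by constructor; revert i; decide +kernel
  loopless := by constructor; revert i; decide +kernel

theorem card_nbr (G : SimpleGraph (Fin 8)) (y : Nat) (v : Fin 8)
    (h : ∀ j : Fin 8, G.Adj v j ↔ tst y v j = true) :
    Nat.card (G.neighborSet v) = pc (row y v) := by
  have : G.neighborSet v = ↑(Finset.univ.filter fun j : Fin 8 => bt (row y v) j = true) := by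
    ext j
    simp [bt_row, h]
  rw [this, pc, Nat.card_coe_set_eq, Set.ncard_coe_finset]

/-! ### Soundness of the search -/

/-- The graph contains the edges in `y` and does not contain those in `n`. -/
def Compat (G : SimpleGraph (Fin 8)) (y n : Nat) : Prop :=
  ∀ a b : Fin 8, (tst y a b = true → G.Adj a b) ∧ (tst n a b = true → ¬ G.Adj a b)

/-- The class of graphs that is searched. -/
structure Good (d : Nat) (G : SimpleGraph (Fin 8)) : Prop where
  harris : G.IsHarris
  min : ∀ v, d ≤ Nat.card (G.neighborSet v)
  sym : ∀ (j : Nat) (h : j + 1 < 8), 2 ≤ j → j ≠ d →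
    G.Adj 1 ⟨j + 1, h⟩ → G.Adj 1 ⟨j, Nat.lt_of_succ_lt h⟩

/-- If the search succeeds, the graph is one of the three. -/
def Sound (d : Nat) (k : Nat → Nat → Bool) : Prop :=
  ∀ (G : SimpleGraph (Fin 8)) (y n : Nat), Good d G → Compat G y n → k y n = true →
    ∃ i, Nonempty (Gr i ≃g G)

theorem edge_sound {d : Nat} {e : Nat} {k : Nat → Nat → Bool} (i j : Fin 8)
    (he : ∀ a b : Fin 8, tst e a b = true → (a = i ∧ b = j) ∨ (a = j ∧ b = i))
    (hk : Sound d k) : Sound d (edgeS e k) := by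
  intro G y n hG hc h
  simp only [edgeS, force_eq, Bool.and_eq_true] at h
  by_cases hij : G.Adj i j
  · refine hk G _ _ hG (fun a b => ⟨fun hab => ?_, (hc a b).2⟩) h.1
    rw [tst_lor, Bool.or_eq_true] at hab
    rcases hab with hab | hab
    · exact (hc a b).1 hab
    · rcases he a b hab with ⟨rfl, rfl⟩ | ⟨rfl, rfl⟩
      · exact hij
      · exact hij.symm
  · refine hk G _ _ hG (fun a b => ⟨(hc a b).1, fun hab => ?_⟩) h.2
    rw [tst_lor, Bool.or_eq_true] at hab
    rcases hab with hab | hab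
    · exact (hc a b).2 hab
    · rcases he a b hab with ⟨rfl, rfl⟩ | ⟨rfl, rfl⟩
      · exact hij
      · exact fun h => hij h.symm

theorem row_sound {d : Nat} {p : Nat} {k : Nat → Nat → Bool} (v : Fin 8)
    (hp : ∀ r : Fin 256, pc r % 2 = 0 → d ≤ pc r → bt p r = true)
    (hk : Sound d k) : Sound d (rowS p v k) := by
  intro G y n hG hc h
  simp only [rowS, Bool.or_eq_true, Bool.and_eq_true, Bool.not_eq_true'] at h
  rcases h with ⟨h1, h2⟩ | h
  · exfalso
    have h1 := Nat.eq_of_beq_eq_true h1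
    have hadj : ∀ j : Fin 8, G.Adj v j ↔ tst y v j = true := by
      intro j
      refine ⟨fun ha => ?_, (hc v j).1⟩
      have h3 : tst (Nat.lor y n) v j = true := by
        rw [← bt_row, h1]; clear ha; revert j; decide
      rw [tst_lor, Bool.or_eq_true] at h3
      rcases h3 with h3 | h3
      · exact h3
      · exact absurd ha ((hc v j).2 h3)
    have hcard := card_nbr G y v hadj
    have := hp ⟨row y v, row_lt _ _⟩ (by
      rw [← hcard]; exact Nat.even_iff.1 (hG.harris.2.2.1.2 v)) (by
      rw [← hcard]; exact hG.min v)
    simp [h2] at this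
  · exact hk G _ _ hG hc h

theorem sym_sound {d : Nat} (j : Nat) {k : Nat → Nat → Bool} (h8 : j + 1 < 8) (h2 : 2 ≤ j)
    (hd : j ≠ d) (hk : Sound d k) : Sound d (symS j k) := by
  intro G y n hG hc h
  simp only [symS, Bool.or_eq_true, Bool.and_eq_true] at h
  rcases h with ⟨h3, h4⟩ | h
  · exfalso
    exact (hc 1 ⟨j, Nat.lt_of_succ_lt h8⟩).2 h4 (hG.sym j h8 h2 hd ((hc 1 ⟨j + 1, h8⟩).1 h3))
  · exact hk G _ _ hG hc h

/-- The `v`-th octal digit. -/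
def dig (l v : Nat) : Nat := Nat.land (Nat.shiftRight l (3 * v)) 7

theorem dig_lt (l v : Nat) : dig l v < 8 := by
  have h : dig l v = (l >>> (3 * v)) &&& 7 := rfl
  rw [h]
  exact lt_of_le_of_lt Nat.and_le_right (by norm_num)

/-- Octal digits as a map on the vertices. -/
def perm (l : Nat) (v : Fin 8) : Fin 8 := ⟨dig l v, dig_lt l v⟩

theorem table_ok : ∀ t ∈ table, (∀ a b : Fin 8,
    tst (gmask t.2.1) a b = tst t.1 (perm t.2.2 a) (perm t.2.2 b)) ∧
    (∀ a b : Fin 8, perm t.2.2 a = perm t.2.2 b → a = b) := by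
  decide +kernel

theorem leaf_sound {d : Nat} : Sound d leafS := by
  intro G y n hG hc h
  simp only [leafS, Bool.and_eq_true, anyB_eq, List.any_eq_true] at h
  obtain ⟨h1, t, ht, h2⟩ := h
  have h1 := Nat.eq_of_beq_eq_true h1
  have h2 := Nat.eq_of_beq_eq_true h2
  obtain ⟨h3, h4⟩ := table_ok t ht
  have hadj : ∀ a b : Fin 8, G.Adj a b ↔ tst y a b = true := by
    intro a b
    refine ⟨fun ha => ?_, (hc a b).1⟩
    have h5 : tst (Nat.lor y n) a b = true := by
      rw [h1]; clear ha; revert a b; decide +kernel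
    rw [tst_lor, Bool.or_eq_true] at h5
    rcases h5 with h5 | h5
    · exact h5
    · exact absurd ha ((hc a b).2 h5)
  refine ⟨t.2.1, ⟨⟨Equiv.ofBijective (perm t.2.2) (Finite.injective_iff_bijective.1
    (fun a b => h4 a b)), ?_⟩⟩⟩
  intro a b
  rw [hadj, ← h2]
  change tst t.1 (perm t.2.2 a) (perm t.2.2 b) = true ↔ tst (gmask t.2.1) a b = true
  rw [h3]

/-- Labels give a cut violating toughness. -/
theorem certs_ok : ∀ c ∈ certs, (∀ a b : Fin 8, dig c.2 a ≠ 0 → dig c.2 b ≠ 0 →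
      dig c.2 a ≠ dig c.2 b → tst c.1 a b = true) ∧
    2 ≤ ((Finset.univ.filter fun v : Fin 8 => dig c.2 v ≠ 0).image fun v : Fin 8 => dig c.2 v).card ∧
    (Finset.univ.filter fun v : Fin 8 => dig c.2 v = 0).card <
      ((Finset.univ.filter fun v : Fin 8 => dig c.2 v ≠ 0).image fun v : Fin 8 => dig c.2 v).card := by
  decide +kernel

theorem not_tough {G : SimpleGraph (Fin 8)} (f : Fin 8 → Nat)
    (h1 : ∀ a b, f a ≠ 0 → f b ≠ 0 → f a ≠ f b → ¬ G.Adj a b)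
    (h2 : 2 ≤ ((Finset.univ.filter fun v => f v ≠ 0).image f).card)
    (h3 : (Finset.univ.filter fun v => f v = 0).card <
      ((Finset.univ.filter fun v => f v ≠ 0).image f).card) : ¬ G.Tough := by
  intro ht
  set S := Finset.univ.filter fun v => f v = 0 with hS
  set I := (Finset.univ.filter fun v => f v ≠ 0).image f with hI
  have hmem : ∀ v : ((S : Set (Fin 8))ᶜ : Set (Fin 8)), f v ≠ 0 := by
    rintro ⟨v, hv⟩
    simpa [hS] using hv
  have hreach : ∀ a b : ((S : Set (Fin 8))ᶜ : Set (Fin 8)),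
      (G.induce ((S : Set (Fin 8))ᶜ)).Reachable a b → f a = f b := by
    rintro a b ⟨p⟩
    induction p with
    | nil => rfl
    | cons hadj _ ih =>
      rw [← ih]
      by_contra hne
      exact h1 _ _ (hmem _) (hmem _) hne hadj
  let F : (G.induce ((S : Set (Fin 8))ᶜ)).ConnectedComponent → I := fun c =>
    Quot.lift (fun v : ((S : Set (Fin 8))ᶜ : Set (Fin 8)) =>
      (⟨f v, Finset.mem_image_of_mem f (by simpa using hmem v)⟩ : I))
      (fun a b hab => Subtype.ext (hreach a b hab)) c
  have hF : Function.Surjective F := by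
    rintro ⟨x, hx⟩
    obtain ⟨v, hv, rfl⟩ := Finset.mem_image.1 hx
    refine ⟨SimpleGraph.connectedComponentMk _ ⟨v, ?_⟩, rfl⟩
    simpa [hS] using hv
  have hle := Nat.card_le_card_of_surjective F hF
  rw [Nat.card_eq_fintype_card, Fintype.card_coe] at hle
  have := ht S (by
    intro hc
    have := hc.preconnected.subsingleton_connectedComponent
    have := Finite.card_le_one_iff_subsingleton.2 this
    omega)
  omega

theorem cut_sound {d : Nat} {k : Nat → Nat → Bool} (hk : Sound d k) : Sound d (cutS k) := by
  intro G y n hG hc h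
  simp only [cutS, Bool.or_eq_true, anyB_eq, List.any_eq_true] at h
  rcases h with ⟨c, hcm, h⟩ | h
  · exfalso
    have h := Nat.eq_of_beq_eq_true h
    obtain ⟨h1, h2, h3⟩ := certs_ok c hcm
    refine not_tough (fun v => dig c.2 v) (fun a b ha hb hab => (hc a b).2 ?_) h2 h3 hG.harris.2.1
    have h4 := h1 a b ha hb hab
    rw [← h, tst_land, Bool.and_eq_true] at h4
    exact h4.2
  · exact hk G _ _ hG hc h

/-! ### Hamiltonian cycles -/

theorem ham_zero (m c R : Nat) : ham m 0 c R = tst m c 0 := rfl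

theorem ham_succ (m l c R : Nat) : ham m (l + 1) c R = true ↔
    ∃ v : Fin 8, v ≠ 0 ∧ tst m c v = true ∧ bt R v = true ∧
      ham m l v (Nat.xor R (2 ^ (v : Nat))) = true := by
  have h : ham m (l + 1) c R = hamStep m (ham m l) c R := rfl
  have e1 := bt_row m c 1
  have e2 := bt_row m c 2
  have e3 := bt_row m c 3
  have e4 := bt_row m c 4
  have e5 := bt_row m c 5
  have e6 := bt_row m c 6
  have e7 := bt_row m c 7
  rw [h, Fin.exists_fin_succ]
  simp only [Fin.exists_fin_succ, hamStep, force_eq, Bool.or_eq_true, Bool.and_eq_true, bt_land]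
  simp at e1 e2 e3 e4 e5 e6 e7 ⊢
  simp [e1, e2, e3, e4, e5, e6, e7, and_assoc]

theorem bt_xor_pow (R : Nat) (v w : Fin 8) (hv : bt R v = true) :
    bt (Nat.xor R (2 ^ (v : Nat))) w = true ↔ bt R w = true ∧ w ≠ v := by
  rw [bt_xor, bt_eq (2 ^ _), Nat.testBit_two_pow]
  by_cases h : w = v
  · subst h; simp [hv]
  · have : ¬ ((v : Nat) = w) := fun h' => h (Fin.ext h'.symm)
    simp [h, this]

theorem ham_path {m : Nat} {G : SimpleGraph (Fin 8)}
    (hc : ∀ a b : Fin 8, tst m a b = true → G.Adj a b) (l : Nat) :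
    ∀ (c : Fin 8) (R : Nat), ham m l c R = true → ∃ L : List (Fin 8), L.length = l ∧ L.Nodup ∧
      (∀ v ∈ L, bt R v = true) ∧ List.IsChain G.Adj (c :: (L ++ [0])) := by
  induction l with
  | zero =>
    intro c R h
    exact ⟨[], rfl, List.nodup_nil, by simp, by simpa using hc c 0 h⟩
  | succ l ih =>
    intro c R h
    obtain ⟨v, -, h1, h2, h3⟩ := (ham_succ m l c R).1 h
    obtain ⟨L, hL, hnd, hR, hch⟩ := ih v _ h3
    refine ⟨v :: L, by simp [hL], ?_, ?_, ?_⟩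
    · rw [List.nodup_cons]
      exact ⟨fun hv => ((bt_xor_pow R v v h2).1 (hR v hv)).2 rfl, hnd⟩
    · intro w hw
      rcases List.mem_cons.1 hw with rfl | hw
      · exact h2
      · exact ((bt_xor_pow R v w h2).1 (hR w hw)).1
    · rw [List.cons_append, List.isChain_cons_cons]
      exact ⟨hc c v h1, hch⟩

theorem path_ham {m : Nat} {G : SimpleGraph (Fin 8)}
    (hc : ∀ a b : Fin 8, G.Adj a b → tst m a b = true) (L : List (Fin 8)) :
    ∀ (c : Fin 8) (R : Nat), L.Nodup → (∀ v ∈ L, bt R v = true ∧ v ≠ 0) →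
      List.IsChain G.Adj (c :: (L ++ [0])) → ham m L.length c R = true := by
  induction L with
  | nil =>
    intro c R _ _ h
    exact hc c 0 (by simpa using h)
  | cons v L ih =>
    intro c R hnd hR hch
    rw [List.nodup_cons] at hnd
    rw [List.cons_append, List.isChain_cons_cons] at hch
    have hv := hR v (by simp)
    refine (ham_succ m L.length c R).2 ⟨v, hv.2, hc c v hch.1, hv.1, ih v _ hnd.2 ?_ hch.2⟩
    intro w hw
    have hw' := hR w (by simp [hw])
    refine ⟨(bt_xor_pow R v w hv.1).2 ⟨hw'.1, ?_⟩, hw'.2⟩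
    rintro rfl
    exact hnd.1 hw

theorem isHam_of_list {G : SimpleGraph (Fin 8)} (L : List (Fin 8)) (hl : L.length = 7)
    (hnd : (0 :: L).Nodup) (hch : List.IsChain G.Adj (0 :: (L ++ [0]))) :
    G.IsHamiltonianGraph := by
  have hall : ∀ v, v ∈ 0 :: L := by
    intro v
    have h1 : (0 :: L).toFinset = Finset.univ := by
      apply Finset.eq_univ_of_card
      rw [List.toFinset_card_of_nodup hnd]
      simp [hl]
    have := Finset.mem_univ v
    rwa [← h1, List.mem_toFinset] at this
  obtain ⟨a, b, c, d, e, f, g, rfl⟩ : ∃ a b c d e f g, L = [a, b, c, d, e, f, g] := by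
    match L, hl with
    | [a, b, c, d, e, f, g], _ => exact ⟨a, b, c, d, e, f, g, rfl⟩
  simp only [List.cons_append, List.nil_append, List.isChain_cons_cons,
    List.IsChain.singleton, and_true] at hch
  obtain ⟨h0, h1, h2, h3, h4, h5, h6, h7⟩ := hch
  refine ⟨0, .cons h0 (.cons h1 (.cons h2 (.cons h3 (.cons h4 (.cons h5 (.cons h6
    (.cons h7 .nil))))))), ?_, ?_⟩
  · rw [SimpleGraph.Walk.cons_isCycle_iff]
    simp only [List.nodup_cons, List.mem_cons, List.not_mem_nil, not_or] at hnd
    constructor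
    · simp only [SimpleGraph.Walk.isPath_def, SimpleGraph.Walk.support_cons,
        SimpleGraph.Walk.support_nil, List.nodup_cons, List.mem_cons, List.not_mem_nil, not_or]
      grind
    · simp only [SimpleGraph.Walk.edges_cons, SimpleGraph.Walk.edges_nil, List.mem_cons,
        List.not_mem_nil, Sym2.eq_iff]
      grind
  · intro v
    have := hall v
    simp only [SimpleGraph.Walk.support_cons, SimpleGraph.Walk.support_nil, List.mem_cons] at this ⊢
    grind

theorem not_isHam {G : SimpleGraph (Fin 8)} {m : Nat}
    (hc : ∀ a b : Fin 8, G.Adj a b → tst m a b = true) (hm : ham m 7 0 254 = false) :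
    ¬ G.IsHamiltonianGraph := by
  rintro ⟨a, p, hp, hs⟩
  obtain ⟨q, hq, hqs⟩ : ∃ q : G.Walk 0 0, q.IsCycle ∧ ∀ v, v ∈ q.support :=
    ⟨p.rotate 0 (hs 0), hp.rotate (hs 0), fun v => by
      rw [SimpleGraph.Walk.mem_support_rotate_iff]; exact hs v⟩
  have hch := q.isChain_adj_support
  have hnd := hq.support_nodup
  have hlast : q.support.getLast (by simp) = 0 := by simp
  rw [← SimpleGraph.Walk.cons_tail_support] at hch hqs
  have hne : q.support.tail ≠ [] := by
    intro h
    rw [h] at hqs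
    simpa using hqs 1
  obtain ⟨L, hL⟩ : ∃ L, q.support.tail = L ++ [0] := by
    refine ⟨q.support.tail.dropLast, ?_⟩
    have := List.dropLast_append_getLast hne
    rw [List.getLast_tail, hlast] at this
    exact this.symm
  rw [hL] at hch hnd hqs
  have h0 : ∀ v ∈ L, v ≠ 0 := by
    rintro v hv rfl
    rw [List.nodup_append] at hnd
    exact hnd.2.2 0 hv 0 (by simp) rfl
  have hndL : L.Nodup := (List.nodup_append.1 hnd).1
  have hlen : L.length = 7 := by
    have : L.toFinset = Finset.univ.erase 0 := by
      ext v
      simp only [List.mem_toFinset, Finset.mem_erase, Finset.mem_univ, and_true]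
      refine ⟨h0 v, fun hv => ?_⟩
      have := hqs v
      simp [hv] at this
      exact this
    rw [← List.toFinset_card_of_nodup hndL, this]
    rfl
  have := path_ham hc L 0 254 hndL (fun v hv => ⟨by
    have := h0 v hv
    clear hv
    revert v; decide, h0 v hv⟩) hch
  rw [hlen] at this
  change ham m 7 0 254 = true at this
  simp [hm] at this

theorem ham_sound {d : Nat} {k : Nat → Nat → Bool} (hk : Sound d k) : Sound d (hamS k) := by
  intro G y n hG hc h
  simp only [hamS, Bool.or_eq_true] at h
  rcases h with h | h
  · exfalso
    obtain ⟨L, h1, h2, h3, h4⟩ := ham_path (fun a b => (hc a b).1) 7 0 254 h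
    refine hG.harris.2.2.2 (isHam_of_list L h1 (List.nodup_cons.2 ⟨fun h0 => ?_, h2⟩) h4)
    exact absurd (h3 0 h0) (by decide)
  · exact hk G _ _ hG hc h

theorem hamT_sound {d : Nat} {k : Nat → Nat → Bool} (hk : Sound d k) : Sound d (hamT k) := by
  intro G y n hG hc h
  simp only [hamT, Bool.or_eq_true, Bool.and_eq_true] at h
  rcases h with ⟨h0, h⟩ | h
  · exfalso
    obtain ⟨L, h1, h2, h3, h4⟩ := ham_path (fun a b => (hc a b).1) 6 1 252 h
    refine hG.harris.2.2.2 (isHam_of_list (1 :: L) (by simp [h1]) ?_ ?_)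
    · rw [List.nodup_cons, List.nodup_cons, List.mem_cons, not_or]
      exact ⟨⟨by decide, fun h => absurd (h3 0 h) (by decide)⟩,
        fun h => absurd (h3 1 h) (by decide), h2⟩
    · rw [List.cons_append, List.isChain_cons_cons]
      exact ⟨(hc 0 1).1 h0, h4⟩
  · exact hk G _ _ hG hc h

/-! ### The search programs are sound -/

theorem p2_ok : ∀ r : Fin 256, pc r % 2 = 0 → 2 ≤ pc r → bt p2 r = true := by
  decide +kernel

theorem sound2 : Sound 2 prog2 :=
  edge_sound 1 2 (by decide +kernel) <| edge_sound 1 3 (by decide +kernel) <|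
  edge_sound 1 4 (by decide +kernel) <| sym_sound 3 (by omega) (by omega) (by omega) <|
  edge_sound 1 5 (by decide +kernel) <| sym_sound 4 (by omega) (by omega) (by omega) <|
  edge_sound 1 6 (by decide +kernel) <| sym_sound 5 (by omega) (by omega) (by omega) <|
  edge_sound 1 7 (by decide +kernel) <| sym_sound 6 (by omega) (by omega) (by omega) <|
  row_sound 1 p2_ok <| edge_sound 2 3 (by decide +kernel) <| edge_sound 2 4 (by decide +kernel) <|
  edge_sound 2 5 (by decide +kernel) <| edge_sound 2 6 (by decide +kernel) <|
  edge_sound 2 7 (by decide +kernel) <| row_sound 2 p2_ok <| edge_sound 3 4 (by decide +kernel) <|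
  edge_sound 3 5 (by decide +kernel) <| edge_sound 3 6 (by decide +kernel) <|
  edge_sound 3 7 (by decide +kernel) <| row_sound 3 p2_ok <| edge_sound 4 5 (by decide +kernel) <|
  edge_sound 4 6 (by decide +kernel) <| edge_sound 4 7 (by decide +kernel) <| row_sound 4 p2_ok <|
  edge_sound 5 6 (by decide +kernel) <| edge_sound 5 7 (by decide +kernel) <| row_sound 5 p2_ok <|
  edge_sound 6 7 (by decide +kernel) <| row_sound 6 p2_ok <| row_sound 7 p2_ok <| cut_sound <|
  hamT_sound <| leaf_sound

theorem p4_ok : ∀ r : Fin 256, pc r % 2 = 0 → 4 ≤ pc r → bt p4 r = true := by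
  decide +kernel

theorem sound4 : Sound 4 prog4 :=
  edge_sound 1 2 (by decide +kernel) <| edge_sound 1 3 (by decide +kernel) <|
  sym_sound 2 (by omega) (by omega) (by omega) <| edge_sound 1 4 (by decide +kernel) <|
  sym_sound 3 (by omega) (by omega) (by omega) <| edge_sound 1 5 (by decide +kernel) <|
  edge_sound 1 6 (by decide +kernel) <| sym_sound 5 (by omega) (by omega) (by omega) <|
  edge_sound 1 7 (by decide +kernel) <| sym_sound 6 (by omega) (by omega) (by omega) <|
  row_sound 1 p4_ok <| edge_sound 2 3 (by decide +kernel) <| edge_sound 2 4 (by decide +kernel) <|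
  edge_sound 2 5 (by decide +kernel) <| edge_sound 2 6 (by decide +kernel) <|
  edge_sound 2 7 (by decide +kernel) <| row_sound 2 p4_ok <| edge_sound 3 4 (by decide +kernel) <|
  edge_sound 3 5 (by decide +kernel) <| edge_sound 3 6 (by decide +kernel) <|
  edge_sound 3 7 (by decide +kernel) <| row_sound 3 p4_ok <| edge_sound 4 5 (by decide +kernel) <|
  edge_sound 4 6 (by decide +kernel) <| edge_sound 4 7 (by decide +kernel) <| row_sound 4 p4_ok <|
  edge_sound 5 6 (by decide +kernel) <| edge_sound 5 7 (by decide +kernel) <| row_sound 5 p4_ok <|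
  edge_sound 6 7 (by decide +kernel) <| row_sound 6 p4_ok <| row_sound 7 p4_ok <| ham_sound <| leaf_sound

theorem p6_ok : ∀ r : Fin 256, pc r % 2 = 0 → 6 ≤ pc r → bt p6 r = true := by
  decide +kernel

theorem sound6 : Sound 6 prog6 :=
  edge_sound 1 2 (by decide +kernel) <| edge_sound 1 3 (by decide +kernel) <|
  sym_sound 2 (by omega) (by omega) (by omega) <| edge_sound 1 4 (by decide +kernel) <|
  sym_sound 3 (by omega) (by omega) (by omega) <| edge_sound 1 5 (by decide +kernel) <|
  sym_sound 4 (by omega) (by omega) (by omega) <| edge_sound 1 6 (by decide +kernel) <|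
  sym_sound 5 (by omega) (by omega) (by omega) <| edge_sound 1 7 (by decide +kernel) <|
  row_sound 1 p6_ok <| edge_sound 2 3 (by decide +kernel) <| edge_sound 2 4 (by decide +kernel) <|
  edge_sound 2 5 (by decide +kernel) <| edge_sound 2 6 (by decide +kernel) <|
  edge_sound 2 7 (by decide +kernel) <| row_sound 2 p6_ok <| edge_sound 3 4 (by decide +kernel) <|
  edge_sound 3 5 (by decide +kernel) <| edge_sound 3 6 (by decide +kernel) <|
  edge_sound 3 7 (by decide +kernel) <| row_sound 3 p6_ok <| ham_sound <|
  edge_sound 4 5 (by decide +kernel) <| edge_sound 4 6 (by decide +kernel) <|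
  edge_sound 4 7 (by decide +kernel) <| row_sound 4 p6_ok <| edge_sound 5 6 (by decide +kernel) <|
  edge_sound 5 7 (by decide +kernel) <| row_sound 5 p6_ok <| edge_sound 6 7 (by decide +kernel) <|
  row_sound 6 p6_ok <| row_sound 7 p6_ok <| ham_sound <| leaf_sound

theorem run2 : prog2 65798 9313761861428314873 = true := by decide +kernel

theorem run4 : prog4 4311810334 9313761857116570337 = true := by decide +kernel

theorem run6 : prog6 282578800148862 9313479282628231809 = true := by decide +kernel


/-! ### Invariance under isomorphism -/

section Transfer

variable {V : Type*} {W : Type*} {G : SimpleGraph V} {H : SimpleGraph W}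

/-- An isomorphism restricted to an induced subgraph. -/
def induceIso (f : G ≃g H) (s : Set V) (t : Set W) (h : ∀ v, v ∈ s ↔ f v ∈ t) :
    G.induce s ≃g H.induce t where
  toEquiv := f.toEquiv.subtypeEquiv h
  map_rel_iff' := by
    intro a b
    exact f.map_rel_iff'

theorem tough_iso (f : G ≃g H) (h : H.Tough) : G.Tough := by
  intro S hS
  have e := induceIso f ((S : Set V)ᶜ) (((S.map f.toEquiv.toEmbedding : Finset W) : Set W)ᶜ) (by
    intro v
    simp)
  have := h (S.map f.toEquiv.toEmbedding) (fun hc => hS (e.connected_iff.2 hc))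
  rw [Finset.card_map] at this
  rwa [Nat.card_congr e.connectedComponentEquiv]

theorem eulerian_iso (f : G ≃g H) (h : H.IsEulerianGraph) : G.IsEulerianGraph := by
  refine ⟨f.connected_iff.2 h.1, fun v => ?_⟩
  rw [Nat.card_congr (f.mapNeighborSet v)]
  exact h.2 _

theorem hamiltonian_iso (f : G ≃g H) (h : G.IsHamiltonianGraph) : H.IsHamiltonianGraph := by
  obtain ⟨a, p, hp, hs⟩ := h
  refine ⟨f a, p.map f.toHom, hp.map f.injective, fun v => ?_⟩
  rw [SimpleGraph.Walk.support_map, List.mem_map]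
  exact ⟨f.symm v, hs _, f.apply_symm_apply v⟩

theorem harris_iso (f : G ≃g H) (h : H.IsHarris) : G.IsHarris := by
  obtain ⟨h1, h2, h3, h4⟩ := h
  exact ⟨Finite.of_equiv W f.toEquiv.symm, tough_iso f h2, eulerian_iso f h3,
    fun h => h4 (hamiltonian_iso f h)⟩

end Transfer

/-! ### The three graphs are Harris graphs -/

/-- All vertices adjacent to `C` or in `C`, inside `R`. -/
def expand (m R C : Nat) : Nat :=
  Nat.land R (((List.finRange 8).foldr
    (fun (v : Fin 8) (A : Nat) => bif bt C v then Nat.lor (row m v) A else A) C))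

/-- Iterated expansion. -/
def flood (m R : Nat) : Nat → Nat → Nat
  | 0, C => C
  | l + 1, C => flood m R l (expand m R C)

/-- An upper bound for the number of components of the graph on `R`. -/
def cc (m R0 R : Nat) : List (Fin 8) → Nat
  | [] => 0
  | v :: l => bif bt R v then
      cc m R0 (Nat.land R (Nat.xor 255 (flood m R0 7 (2 ^ (v : Nat))))) l + 1
    else cc m R0 R l

theorem cc_ok : ∀ (i : Fin 3) (R : Fin 256),
    (R = 255 → cc (gmask i) R R (List.finRange 8) ≤ 1) ∧
    (R ≠ 255 → cc (gmask i) R R (List.finRange 8) + pc R ≤ 8) := by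
  decide +kernel

section Tough

variable {G : SimpleGraph (Fin 8)} {m : Nat} {R : Nat}

theorem expand_reach (hc : ∀ a b : Fin 8, tst m a b = true → G.Adj a b) {s : Set (Fin 8)}
    (hs : ∀ v : Fin 8, bt R v = true ↔ v ∈ s) (x : s) (C : Nat)
    (hC : ∀ v : Fin 8, bt C v = true → ∃ h : v ∈ s, (G.induce s).Reachable x ⟨v, h⟩) (v : Fin 8)
    (hv : bt (expand m R C) v = true) : ∃ h : v ∈ s, (G.induce s).Reachable x ⟨v, h⟩ := by
  rw [expand, bt_land, Bool.and_eq_true] at hv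
  obtain ⟨h1, h2⟩ := hv
  have hvs := (hs v).1 h1
  have key : ∀ l : List (Fin 8), bt (l.foldr
      (fun (v : Fin 8) (A : Nat) => bif bt C v then Nat.lor (row m v) A else A) C) v = true →
      bt C v = true ∨ ∃ w : Fin 8, bt C w = true ∧ tst m w v = true := by
    intro l
    induction l with
    | nil => exact fun h => Or.inl h
    | cons w l ih =>
      intro h
      rw [List.foldr_cons] at h
      cases hw : bt C w with
      | false => rw [hw] at h; exact ih h
      | true =>
        rw [hw, cond_true, bt_lor, Bool.or_eq_true, bt_row] at h
        rcases h with h | h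
        · exact Or.inr ⟨w, hw, h⟩
        · exact ih h
  rcases key _ h2 with h | ⟨w, hw, h⟩
  · exact hC v h
  · obtain ⟨hws, hr⟩ := hC w hw
    refine ⟨hvs, hr.trans (SimpleGraph.Adj.reachable ?_)⟩
    exact hc w v h

theorem flood_reach (hc : ∀ a b : Fin 8, tst m a b = true → G.Adj a b) {s : Set (Fin 8)}
    (hs : ∀ v : Fin 8, bt R v = true ↔ v ∈ s) (x : s) (l : Nat) : ∀ (C : Nat),
    (∀ v : Fin 8, bt C v = true → ∃ h : v ∈ s, (G.induce s).Reachable x ⟨v, h⟩) →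
    ∀ v : Fin 8, bt (flood m R l C) v = true →
      ∃ h : v ∈ s, (G.induce s).Reachable x ⟨v, h⟩ := by
  induction l with
  | zero => exact fun C hC => hC
  | succ l ih => exact fun C hC => ih _ (expand_reach hc hs x C hC)

theorem cc_reach (hc : ∀ a b : Fin 8, tst m a b = true → G.Adj a b) {s : Set (Fin 8)}
    (hs : ∀ v : Fin 8, bt R v = true ↔ v ∈ s) (l : List (Fin 8)) : ∀ R' : Nat,
    (∀ v : Fin 8, bt R' v = true → v ∈ s ∧ v ∈ l) →
    ∃ T : List s, T.length ≤ cc m R R' l ∧ ∀ v : s, bt R' (v : Fin 8) = true →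
      ∃ t ∈ T, (G.induce s).Reachable t v := by
  induction l with
  | nil =>
    intro R' h
    exact ⟨[], by simp [cc], fun v hv => absurd (h v hv).2 (by simp)⟩
  | cons x l ih =>
    intro R' h
    cases hx : bt R' x with
    | false =>
      obtain ⟨T, hT, hT2⟩ := ih R' (fun v hv => ⟨(h v hv).1, by
        rcases List.mem_cons.1 (h v hv).2 with rfl | h'
        · simp [hx] at hv
        · exact h'⟩)
      refine ⟨T, ?_, hT2⟩
      rw [cc, hx]
      exact hT
    | true =>
      have hxs := (h x hx).1
      have h255 : ∀ v : Fin 8, bt 255 v = true := by decide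
      have hfl := flood_reach hc hs ⟨x, hxs⟩ 7 (2 ^ (x : Nat)) (by
        intro v hv
        rw [bt_eq, Nat.testBit_two_pow, decide_eq_true_eq] at hv
        have : x = v := Fin.ext hv
        subst this
        exact ⟨hxs, SimpleGraph.Reachable.refl _⟩)
      have hxfl : bt (flood m R 7 (2 ^ (x : Nat))) x = true := by
        have hstep : ∀ C, bt C x = true → bt (expand m R C) x = true := by
          intro C hC
          rw [expand, bt_land, (hs x).2 hxs, Bool.true_and]
          generalize List.finRange 8 = l'
          induction l' with
          | nil => exact hC
          | cons w l' ih' =>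
            rw [List.foldr_cons]
            cases bt C w with
            | false => exact ih'
            | true => rw [cond_true, bt_lor, ih', Bool.or_true]
        have : ∀ n C, bt C x = true → bt (flood m R n C) x = true := by
          intro n
          induction n with
          | zero => exact fun C h => h
          | succ n ih' => exact fun C h => ih' _ (hstep C h)
        apply this
        rw [bt_eq, Nat.testBit_two_pow_self]
      obtain ⟨T, hT, hT2⟩ := ih (Nat.land R' (Nat.xor 255 (flood m R 7 (2 ^ (x : Nat))))) (by
        intro v hv
        rw [bt_land, bt_xor, h255, Bool.and_eq_true] at hv
        refine ⟨(h v hv.1).1, ?_⟩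
        rcases List.mem_cons.1 (h v hv.1).2 with rfl | h'
        · simp [hxfl] at hv
        · exact h')
      refine ⟨⟨x, hxs⟩ :: T, ?_, ?_⟩
      · rw [cc, hx]
        simpa using hT
      · intro v hv
        cases hf : bt (flood m R 7 (2 ^ (x : Nat))) (v : Fin 8) with
        | true =>
          obtain ⟨_, hr⟩ := hfl v hf
          exact ⟨_, List.mem_cons_self, hr⟩
        | false =>
          obtain ⟨t, ht, hr⟩ := hT2 v (by rw [bt_land, bt_xor, h255, hf, hv]; rfl)
          exact ⟨t, List.mem_cons_of_mem _ ht, hr⟩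

end Tough

theorem Gr_tst (i : Fin 3) (a b : Fin 8) : (Gr i).Adj a b ↔ tst (gmask i) a b = true := Iff.rfl

/-- The component bound, for the complement of a set of vertices. -/
theorem Gr_reps (i : Fin 3) (S : Finset (Fin 8)) :
    ∃ T : List ((S : Set (Fin 8))ᶜ : Set (Fin 8)),
      (∀ v, ∃ t ∈ T, ((Gr i).induce ((S : Set (Fin 8))ᶜ)).Reachable t v) ∧
      (S = ∅ → T.length ≤ 1) ∧ (S ≠ ∅ → T.length ≤ S.card) := by
  classical
  let R : Nat := Nat.ofBits (fun v : Fin 8 => decide (v ∉ S))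
  have hR : R < 256 := Nat.ofBits_lt_two_pow _
  have hbt : ∀ v : Fin 8, bt R v = decide (v ∉ S) := by
    intro v
    rw [bt_eq, Nat.testBit_ofBits_lt _ _ v.2]
  have hpc : pc R + S.card = 8 := by
    have h1 : pc R = (Finset.univ \ S).card := by
      rw [pc]
      congr 1
      ext v
      simp [hbt]
    rw [h1]
    have := Finset.card_sdiff_add_card_eq_card (Finset.subset_univ S)
    simpa using this
  obtain ⟨T, hT, hT2⟩ := cc_reach (G := Gr i) (m := gmask i) (R := R)
    (s := (S : Set (Fin 8))ᶜ) (fun a b h => h) (by intro v; simp [hbt]) (List.finRange 8) R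
    (by intro v hv; simpa [hbt] using hv)
  obtain ⟨h1, h2⟩ := cc_ok i ⟨R, hR⟩
  refine ⟨T, fun v => hT2 v ?_, ?_, ?_⟩
  · rw [hbt, decide_eq_true_eq]
    exact fun h => v.2 (Finset.mem_coe.2 h)
  · intro hS
    subst hS
    have : R = 255 := by
      change Nat.ofBits (fun v : Fin 8 => decide (v ∉ (∅ : Finset (Fin 8)))) = 255
      simp only [Finset.notMem_empty, not_false_eq_true, decide_true]
      decide
    exact hT.trans (h1 (Fin.ext this))
  · intro hS
    have : R ≠ 255 := by
      intro h
      apply hS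
      rw [Finset.eq_empty_iff_forall_notMem]
      intro v
      have h255 : ∀ v : Fin 8, bt 255 v = true := by decide
      have := hbt v
      rw [h, h255] at this
      simpa using this.symm
    have := h2 (fun h => this (congrArg Fin.val h))
    change cc (gmask i) R R (List.finRange 8) + pc R ≤ 8 at this
    omega

theorem card_comp_le {V : Type*} {G : SimpleGraph V} (T : List V)
    (h : ∀ v, ∃ t ∈ T, G.Reachable t v) : Nat.card G.ConnectedComponent ≤ T.length := by
  have : Function.Surjective (fun k : Fin T.length => G.connectedComponentMk (T.get k)) := by
    intro c
    induction c using SimpleGraph.ConnectedComponent.ind with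
    | h v =>
      obtain ⟨t, ht, hr⟩ := h v
      obtain ⟨k, rfl⟩ := List.get_of_mem ht
      exact ⟨k, SimpleGraph.ConnectedComponent.sound hr⟩
  simpa using Nat.card_le_card_of_surjective _ this

theorem Gr_conn (i : Fin 3) :
    ((Gr i).induce (((∅ : Finset (Fin 8)) : Set (Fin 8))ᶜ)).Connected := by
  obtain ⟨T, h1, h2, -⟩ := Gr_reps i ∅
  have h2 := h2 rfl
  have : Nonempty ((((∅ : Finset (Fin 8)) : Set (Fin 8))ᶜ : Set (Fin 8))) := ⟨⟨0, by simp⟩⟩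
  refine SimpleGraph.Connected.mk ?_
  intro a b
  obtain ⟨t, ht, hr⟩ := h1 a
  obtain ⟨t', ht', hr'⟩ := h1 b
  have : t = t' := by
    match T, h2 with
    | [], _ => simp at ht
    | [x], _ => simp at ht ht'; rw [ht, ht']
  subst this
  exact hr.symm.trans hr'

theorem Gr_harris (i : Fin 3) : (Gr i).IsHarris := by
  refine ⟨inferInstance, ?_, ⟨?_, ?_⟩, ?_⟩
  · intro S hS
    obtain ⟨T, h1, -, h3⟩ := Gr_reps i S
    refine (card_comp_le T h1).trans (h3 ?_)
    rintro rfl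
    exact hS (Gr_conn i)
  · have : (Gr i).Preconnected := fun a b =>
      ((Gr_conn i).preconnected ⟨a, by simp⟩ ⟨b, by simp⟩).map
        (SimpleGraph.Embedding.induce _).toHom
    exact SimpleGraph.Connected.mk this
  · intro v
    rw [card_nbr (Gr i) (gmask i) v (fun j => Iff.rfl), Nat.even_iff]
    revert i v
    decide +kernel
  · refine not_isHam (m := gmask i) (fun a b h => h) ?_
    revert i
    decide +kernel

theorem Gr_noniso (i j : Fin 3) (hij : i ≠ j) : IsEmpty (Gr i ≃g Gr j) := by
  constructor
  intro f
  have h : ∑ v, Nat.card ((Gr i).neighborSet v) ^ 2 = ∑ v, Nat.card ((Gr j).neighborSet v) ^ 2 := by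
    rw [← Equiv.sum_comp f.toEquiv (fun v => Nat.card ((Gr j).neighborSet v) ^ 2)]
    refine Finset.sum_congr rfl fun v _ => ?_
    rw [Nat.card_congr (f.mapNeighborSet v)]
    rfl
  have e : ∀ i v, Nat.card ((Gr i).neighborSet v) = pc (row (gmask i) v) := fun i v =>
    card_nbr (Gr i) (gmask i) v (fun j => Iff.rfl)
  simp only [e] at h
  revert i j
  have : ∀ i j : Fin 3, i ≠ j → ¬ (∑ v : Fin 8, pc (row (gmask i) v) ^ 2 =
      ∑ v : Fin 8, pc (row (gmask j) v) ^ 2) := by decide +kernel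
  exact fun i j hij _ h => this i j hij h

/-! ### Relabelling -/

theorem lower_card (S : Finset (Fin 8)) (h : ∀ a b, a ≤ b → b ∈ S → a ∈ S) (j : Fin 8) :
    j ∈ S ↔ (j : Nat) < S.card := by
  constructor
  · intro hj
    have : Finset.Iic j ⊆ S := fun a ha => h a j (Finset.mem_Iic.1 ha) hj
    have := Finset.card_le_card this
    rw [Fin.card_Iic] at this
    omega
  · intro hj
    by_contra hn
    have : S ⊆ Finset.Iio j := fun a ha => Finset.mem_Iio.2 (by
      by_contra hlt
      exact hn (h j a (not_lt.1 hlt) ha))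
    have := Finset.card_le_card this
    rw [Fin.card_Iio] at this
    omega

theorem exists_good (G : SimpleGraph (Fin 8)) (hG : G.IsHarris) :
    ∃ (d : Nat) (H : SimpleGraph (Fin 8)), (d = 2 ∨ d = 4 ∨ d = 6) ∧ Nonempty (H ≃g G) ∧
      Good d H ∧ ∀ j : Fin 8, H.Adj 0 j ↔ j ≠ 0 ∧ (j : Nat) ≤ d := by
  classical
  obtain ⟨x, hx⟩ := Finite.exists_min (fun v => Nat.card (G.neighborSet v))
  have hdeg : Nat.card (G.neighborSet x) = (Finset.univ.filter fun v => G.Adj x v).card := by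
    have : G.neighborSet x = ↑(Finset.univ.filter fun v => G.Adj x v) := by ext; simp
    rw [this, Nat.card_coe_set_eq, Set.ncard_coe_finset]
  set d := Nat.card (G.neighborSet x) with hd
  have heven : Even d := hG.2.2.1.2 x
  obtain ⟨a, ha⟩ : ∃ a, G.Adj x a := by
    have := hG.2.2.1.1.preconnected.exists_adj_of_nontrivial x
    exact this
  have hd0 : 0 < d := by
    rw [hdeg, Finset.card_pos]
    exact ⟨a, by simpa using ha⟩
  have hins : (insert x (Finset.univ.filter fun v => G.Adj x v)).card = d + 1 := by
    rw [Finset.card_insert_of_notMem (by simp), hdeg]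
  have hd7 : d + 1 ≤ 8 := by
    rw [← hins]
    exact (Finset.card_le_univ _).trans (by simp)
  have hd' : d = 2 ∨ d = 4 ∨ d = 6 := by
    rw [Nat.even_iff] at heven
    omega
  let key : Fin 8 → Nat := fun v =>
    if v = x then 0 else if v = a then 1 else
      if G.Adj x v then (if G.Adj a v then 2 else 3) else (if G.Adj a v then 4 else 5)
  have hxa : a ≠ x := ha.ne.symm
  let σ := Tuple.sort key
  have hmono : ∀ i j : Fin 8, i ≤ j → key (σ i) ≤ key (σ j) := fun i j h =>
    Tuple.monotone_sort key h
  have hk0 : ∀ v, key v = 0 ↔ v = x := by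
    intro v; simp only [key]; split_ifs <;> simp_all
  have hk1 : ∀ v, key v ≤ 1 ↔ v = x ∨ v = a := by
    intro v; simp only [key]; split_ifs <;> simp_all
  have hk3 : ∀ v, key v ≤ 3 ↔ v = x ∨ G.Adj x v := by
    intro v; simp only [key]; split_ifs <;> simp_all
  have hka : ∀ v, v ≠ x → v ≠ a → (G.Adj a v ↔ key v = 2 ∨ key v = 4) := by
    intro v; simp only [key]; split_ifs <;> simp_all
  have hk5 : ∀ v, key v ≤ 5 := by
    intro v; simp only [key]; split_ifs <;> simp
  clear_value σ key
  have hσ0 : σ 0 = x := by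
    rw [← hk0]
    have := hmono 0 (σ.symm x) (Fin.zero_le _)
    rw [Equiv.apply_symm_apply, (hk0 x).2 rfl] at this
    omega
  have hσ1 : σ 1 = a := by
    have h1 : σ.symm a ≠ 0 := by
      intro h
      rw [Equiv.symm_apply_eq, hσ0] at h
      exact hxa h
    have h2 : (1 : Fin 8) ≤ σ.symm a := by
      generalize σ.symm a = z at h1
      revert z; decide
    have := hmono 1 _ h2
    rw [Equiv.apply_symm_apply] at this
    rcases (hk1 _).1 (this.trans ((hk1 a).2 (Or.inr rfl))) with h | h
    · rw [← hσ0] at h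
      exact absurd (σ.injective h) (by decide)
    · exact h
  have hσd : ∀ j : Fin 8, key (σ j) ≤ 3 ↔ (j : Nat) ≤ d := by
    intro j
    have h1 := lower_card (Finset.univ.filter fun j => key (σ j) ≤ 3) (by
      intro a b hab hb
      simp only [Finset.mem_filter, Finset.mem_univ, true_and] at hb ⊢
      exact (hmono a b hab).trans hb) j
    have h2 : (Finset.univ.filter fun j => key (σ j) ≤ 3).card = d + 1 := by
      rw [← hins]
      refine Finset.card_bij (fun j _ => σ j) ?_ (fun _ _ _ _ h => σ.injective h) ?_
      · intro j hj
        simpa [hk3] using hj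
      · intro v hv
        exact ⟨σ.symm v, by simpa [hk3] using hv, by simp⟩
    rw [h2] at h1
    simp only [Finset.mem_filter, Finset.mem_univ, true_and] at h1
    rw [h1]
    omega
  have iso : G.comap σ ≃g G := SimpleGraph.Iso.comap σ G
  refine ⟨d, G.comap σ, hd', ⟨iso⟩, ⟨harris_iso iso hG, ?_, ?_⟩, ?_⟩
  · intro v
    rw [Nat.card_congr (iso.mapNeighborSet v)]
    exact hx _
  · intro j h8 h2 hjd hadj
    rw [SimpleGraph.comap_adj, hσ1] at hadj ⊢
    have hne : ∀ z : Fin 8, 2 ≤ (z : Nat) → σ z ≠ x ∧ σ z ≠ a := by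
      intro z hz
      rw [← hσ0, ← hσ1]
      constructor
      · intro h
        rw [σ.injective h] at hz
        exact absurd hz (by decide)
      · intro h
        rw [σ.injective h] at hz
        exact absurd hz (by decide)
    have h8' : j < 8 := Nat.lt_of_succ_lt h8
    obtain ⟨n1, n2⟩ := hne ⟨j + 1, h8⟩ (Nat.le_succ_of_le h2)
    obtain ⟨n3, n4⟩ := hne ⟨j, h8'⟩ h2
    have hadj' := (hka _ n1 n2).1 hadj
    refine (hka _ n3 n4).2 ?_
    have hm := hmono ⟨j, h8'⟩ ⟨j + 1, h8⟩ (Nat.le_succ j)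
    have d1 : _ ↔ j + 1 ≤ d := hσd ⟨j + 1, h8⟩
    have d2 : _ ↔ j ≤ d := hσd ⟨j, h8'⟩
    have hn1 : ¬ key (σ ⟨j, h8'⟩) ≤ 1 := by rw [hk1]; tauto
    have hu := hk5 (σ ⟨j + 1, h8⟩)
    clear_value d
    generalize key (σ ⟨j, h8'⟩) = A at *
    generalize key (σ ⟨j + 1, h8⟩) = B at *
    clear hne hmono hσd hx hk0 hk1 hk3 hka hk5 hins hdeg
    by_cases hlt : j < d
    · have := d1.2 hlt
      omega
    · have : ¬ A ≤ 3 := fun h => by have := d2.1 h; omega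
      omega
  · intro j
    rw [SimpleGraph.comap_adj, hσ0, ← hσd, hk3]
    constructor
    · intro h
      refine ⟨?_, Or.inr h⟩
      rintro rfl
      rw [hσ0] at h
      exact G.loopless.irrefl _ h
    · rintro ⟨h1, h2 | h2⟩
      · rw [← hσ0] at h2
        exact absurd (σ.injective h2) h1
      · exact h2

theorem compat_init {d : Nat} {H : SimpleGraph (Fin 8)} {y n : Nat}
    (h : ∀ j : Fin 8, H.Adj 0 j ↔ j ≠ 0 ∧ (j : Nat) ≤ d)
    (hy : ∀ a b : Fin 8, tst y a b = true →
      (a = 0 ∧ b ≠ 0 ∧ (b : Nat) ≤ d) ∨ (b = 0 ∧ a ≠ 0 ∧ (a : Nat) ≤ d))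
    (hn : ∀ a b : Fin 8, tst n a b = true →
      a = b ∨ (a = 0 ∧ ¬ (b : Nat) ≤ d) ∨ (b = 0 ∧ ¬ (a : Nat) ≤ d)) : Compat H y n := by
  intro a b
  constructor
  · intro ht
    rcases hy a b ht with ⟨rfl, h1⟩ | ⟨rfl, h1⟩
    · exact (h b).2 h1
    · exact ((h a).2 h1).symm
  · intro ht hadj
    rcases hn a b ht with rfl | ⟨rfl, h1⟩ | ⟨rfl, h1⟩
    · exact H.loopless.irrefl _ hadj
    · exact h1 ((h b).1 hadj).2
    · exact h1 ((h a).1 hadj.symm).2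

theorem classify (G : SimpleGraph (Fin 8)) (hG : G.IsHarris) : ∃ i, Nonempty (Gr i ≃g G) := by
  obtain ⟨d, H, hd, ⟨f⟩, hgood, hadj⟩ := exists_good G hG
  suffices h : ∃ i, Nonempty (Gr i ≃g H) by
    obtain ⟨i, ⟨g⟩⟩ := h
    exact ⟨i, ⟨g.trans f⟩⟩
  rcases hd with rfl | rfl | rfl
  · exact sound2 H _ _ hgood (compat_init hadj (by decide +kernel) (by decide +kernel)) run2
  · exact sound4 H _ _ hgood (compat_init hadj (by decide +kernel) (by decide +kernel)) run4
  · exact sound6 H _ _ hgood (compat_init hadj (by decide +kernel) (by decide +kernel)) run6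

end HarrisEight

/-- Up to isomorphism, there are exactly 3 Harris graphs on 8 vertices. -/
theorem three_isHarris_on_eight :
    ∃ G : Fin 3 → SimpleGraph (Fin 8),
      (∀ i, (G i).IsHarris) ∧
      (∀ i j, i ≠ j → IsEmpty (G i ≃g G j)) ∧
      ∀ (V : Type u) (G' : SimpleGraph V), Nat.card V = 8 → G'.IsHarris →
        ∃ i, Nonempty (G i ≃g G') := by

  refine ⟨HarrisEight.Gr, HarrisEight.Gr_harris, HarrisEight.Gr_noniso, ?_⟩
  intro V G' hV hG'
  have : Finite V := hG'.1
  have e : Fin 8 ≃ V := (Finite.equivFinOfCardEq hV).symm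
  have f : G'.comap e ≃g G' := SimpleGraph.Iso.comap e G'
  obtain ⟨i, ⟨g⟩⟩ := HarrisEight.classify _ (HarrisEight.harris_iso f hG')
  exact ⟨i, ⟨g.trans f⟩⟩
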